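/- Fix θ ∈ ℝ and σ > 0, and let ψ_{M,θ}(α) = Φ_M(v)(θ−α) + φ_M(v)σ with v = (θ−α)/σ. Then for every β ∈ (−1, 0), sup_{α∈ℝ}(βα − ψ_{M,θ}(α)) = βθ − (σ/2)·√(1 − (2β+1)²). -/

import Mathlib

/-- Φ_M(v) = (1 + v/√(1+v²))/2. -/
noncomputable def PhiM (v : ℝ) : ℝ := (1 + v / Real.sqrt (1 + v ^ 2)) / 2

/-- φ_M(v) = 1/(2√(1+v²)). -/
noncomputable def phiM (v : ℝ) : ℝ := 1 / (2 * Real.sqrt (1 + v ^ 2))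

theorem aux_psi (θ σ : ℝ) (hσ : 0 < σ) (β v : ℝ) :
    β * (θ - σ * v) - (PhiM v * (σ * v) + phiM v * σ) =
      β * θ - (σ / 2) * ((2 * β + 1) * v + Real.sqrt (1 + v ^ 2)) := by
  have hs : 0 < Real.sqrt (1 + v ^ 2) := Real.sqrt_pos.mpr (by positivity)
  have h2 : Real.sqrt (1 + v ^ 2) ^ 2 = 1 + v ^ 2 := Real.sq_sqrt (by positivity)
  unfold PhiM phiM
  generalize Real.sqrt (1 + v ^ 2) = s at *
  field_simp
  linear_combination σ * h2

theorem stmt_19 (θ σ : ℝ) (hσ : 0 < σ) (β : ℝ) (hβ : β ∈ Set.Ioo (-1 : ℝ) 0) :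
    (⨆ α : ℝ,
        (β * α - (PhiM ((θ - α) / σ) * (θ - α) + phiM ((θ - α) / σ) * σ))) =
      β * θ - (σ / 2) * Real.sqrt (1 - (2 * β + 1) ^ 2) := by
  obtain ⟨h1, h0⟩ := hβ
  have hpos : 0 < 1 - (2 * β + 1) ^ 2 := by nlinarith
  have hk : 0 < Real.sqrt (1 - (2 * β + 1) ^ 2) := Real.sqrt_pos.mpr hpos
  have hk2 : Real.sqrt (1 - (2 * β + 1) ^ 2) ^ 2 = 1 - (2 * β + 1) ^ 2 := Real.sq_sqrt hpos.le
  generalize Real.sqrt (1 - (2 * β + 1) ^ 2) = k at *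
  have key : IsGreatest (Set.range fun α : ℝ =>
      (β * α - (PhiM ((θ - α) / σ) * (θ - α) + phiM ((θ - α) / σ) * σ)))
      (β * θ - (σ / 2) * k) := by
    constructor
    · refine ⟨θ - σ * (-(2 * β + 1) / k), ?_⟩
      have e : θ - (θ - σ * (-(2 * β + 1) / k)) = σ * (-(2 * β + 1) / k) := by ring
      have e2 : σ * (-(2 * β + 1) / k) / σ = -(2 * β + 1) / k := by field_simp
      have hs : Real.sqrt (1 + (-(2 * β + 1) / k) ^ 2) = 1 / k := by
        rw [Real.sqrt_eq_iff_mul_self_eq (by positivity) (by positivity)]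
        field_simp
        linear_combination hk2
      simp only [e, e2]
      rw [aux_psi θ σ hσ, hs]
      field_simp
      linear_combination σ * hk2
    · rintro _ ⟨α, rfl⟩
      have e : α = θ - σ * ((θ - α) / σ) := by field_simp; ring
      have e2 : θ - α = σ * ((θ - α) / σ) := by field_simp
      generalize (θ - α) / σ = v at *
      simp only [e2]
      have e3 : σ * v / σ = v := by field_simp
      rw [e, e3, aux_psi θ σ hσ]
      have : k - (2 * β + 1) * v ≤ Real.sqrt (1 + v ^ 2) := by
        apply Real.le_sqrt_of_sq_le
        nlinarith [sq_nonneg (k * v + (2 * β + 1))]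
      nlinarith
  exact key.csSup_eq
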